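/- Let A be an architecture and C a finite set of constraints (negative constraints of the form α ∋ A ⇒ β ∋ B and positive constraints Pos(α, A)) such that for every negative constraint α ∋ A ⇒ β ∋ B in C, the agent α cannot compute terms of type A. Then every valid trace through the architecture Safe(A, C) produced by the second algorithm satisfies every negative constraint in C. -/

import Mathlib

namespace PrivacyByDesign

/-- Object-level types over a set `σ` of atomic types. -/
inductive Ty (σ : Type) : Type where
  | atom : σ → Ty σ
  | arrow : Ty σ → Ty σ → Ty σ

/-- `Ty.arrows [A₁, …, Aₙ] B` is the type `A₁ → ⋯ → Aₙ → B`. -/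
def Ty.arrows {σ : Type} : List (Ty σ) → Ty σ → Ty σ
  | [], B => B
  | A :: As, B => Ty.arrow A (Ty.arrows As B)

/-- Rename the atomic types occurring in a type. -/
def Ty.mapAtom {σ σ' : Type} (f : σ → σ') : Ty σ → Ty σ'
  | .atom a => .atom (f a)
  | .arrow A B => .arrow (Ty.mapAtom f A) (Ty.mapAtom f B)

/-- Terms over a set `κ` of constructors. -/
inductive Tm (κ : Type) : Type where
  | con : κ → Tm κ
  | app : Tm κ → Tm κ → Tm κ

/-- `Tm.apps f [t₁, …, tₘ]` is the applied term `f t₁ ⋯ tₘ`. -/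
def Tm.apps {κ : Type} : Tm κ → List (Tm κ) → Tm κ
  | f, [] => f
  | f, t :: ts => Tm.apps (Tm.app f t) ts

/-- Rename the constructors occurring in a term. -/
def Tm.mapCon {κ κ' : Type} (g : κ → κ') : Tm κ → Tm κ'
  | .con c => .con (g c)
  | .app s t => .app (Tm.mapCon g s) (Tm.mapCon g t)

/-- An architecture over a type system: each constructor `c : κ` has the type `conTy c`;
`H α` is the set of constructors that agent `α` initially possesses; `M α β` is the set
of atomic types that `α` may send in a message to `β`. -/
structure Arch (Ag σ κ : Type) : Type where
  conTy : κ → Ty σ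
  H : Ag → Set κ
  M : Ag → Ag → Set σ

/-- An event `α →^{t : A} β`. -/
structure Event (Ag σ κ : Type) : Type where
  src : Ag
  tm : Tm κ
  ty : Ty σ
  tgt : Ag

/-- A trace is a finite sequence of events. -/
abbrev Trace (Ag σ κ : Type) : Type := List (Event Ag σ κ)

/-- The derivable judgements `τ ⊢ α ∋ t : A`, generated by the rules
(init), (message₁), (message₂) and (func). -/
inductive Deriv {Ag σ κ : Type} (𝒜 : Arch Ag σ κ) :
    Trace Ag σ κ → Ag → Tm κ → Ty σ → Prop where
  | init {α : Ag} {c : κ} :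
      c ∈ 𝒜.H α → Deriv 𝒜 [] α (Tm.con c) (𝒜.conTy c)
  | message₁ {τ : Trace Ag σ κ} {α β : Ag} {t : Tm κ} {A : σ} :
      A ∈ 𝒜.M α β → Deriv 𝒜 τ α t (Ty.atom A) →
      Deriv 𝒜 (τ ++ [⟨α, t, Ty.atom A, β⟩]) β t (Ty.atom A)
  | message₂ {τ : Trace Ag σ κ} {α β γ : Ag} {t s : Tm κ} {A : σ} {C : Ty σ} :
      A ∈ 𝒜.M α β → Deriv 𝒜 τ α t (Ty.atom A) → Deriv 𝒜 τ γ s C →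
      Deriv 𝒜 (τ ++ [⟨α, t, Ty.atom A, β⟩]) γ s C
  | func {τ : Trace Ag σ κ} {α : Ag} {f t : Tm κ} {A B : Ty σ} :
      Deriv 𝒜 τ α f (Ty.arrow A B) → Deriv 𝒜 τ α t A →
      Deriv 𝒜 τ α (Tm.app f t) B

/-- A trace `τ` is valid iff `τ ⊢ α ∋ t : A` is derivable for some `α`, `t`, `A`. -/
def ValidTrace {Ag σ κ : Type} (𝒜 : Arch Ag σ κ) (τ : Trace Ag σ κ) : Prop :=
  ∃ α t A, Deriv 𝒜 τ α t A

/-- Agent `α` can compute terms of (atomic) type `A` iff it initially possesses a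
constructor of type `B₁ → ⋯ → Bₙ → A` (with `n ≥ 0`). -/
def CanCompute {Ag σ κ : Type} (𝒜 : Arch Ag σ κ) (α : Ag) (A : σ) : Prop :=
  ∃ c ∈ 𝒜.H α, ∃ Bs : List (Ty σ), 𝒜.conTy c = Ty.arrows Bs (Ty.atom A)

/-- The chain of events `α₁ →^{t:B} α₂, …, αₙ₋₁ →^{t:B} αₙ` along the list
`αs = [α₁, …, αₙ]`. -/
def chainEvents {Ag σ κ : Type} (t : Tm κ) (B : Ty σ) (αs : List Ag) : Trace Ag σ κ :=
  List.zipWith (fun a b => Event.mk a t B b) αs αs.tail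

/-- Atomic types of the safe type system `T_C` with proof types (second algorithm):
the base atomic types of `T`, the certified types `C_α(A)` and the proof types
`P_α(A)`. -/
inductive SAtom2 (Ag σ : Type) : Type where
  | base : σ → SAtom2 Ag σ
  | cert : Ag → σ → SAtom2 Ag σ
  | prf : Ag → σ → SAtom2 Ag σ

/-- Constructors of the safe type system `T_C` (second algorithm): the base
constructors of `T` and the constructors `m_{αA}`, `π_{αA}` and `p_{αA}`. -/
inductive SCon2 (Ag σ κ : Type) : Type where
  | base : κ → SCon2 Ag σ κ
  | m : Ag → σ → SCon2 Ag σ κ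
  | pi : Ag → σ → SCon2 Ag σ κ
  | p : Ag → σ → SCon2 Ag σ κ

/-- The typing of the constructors of `T_C`, where `Cs α A` lists the pairs
`(β₁, B₁), …, (βₙ, Bₙ)` such that the negative constraints of `C` beginning with
`α ∋ A` are `α ∋ A ⇒ β₁ ∋ B₁, …, α ∋ A ⇒ βₙ ∋ Bₙ`:
`m_{αA} : A → P_{β₁}(B₁) → ⋯ → P_{βₙ}(Bₙ) → C_α(A)`,
`π_{αA} : C_α(A) → A` and `p_{αA} : A → P_α(A)`. -/
def safeConTy2 {Ag σ κ : Type} (conTy : κ → Ty σ) (Cs : Ag → σ → List (Ag × σ)) :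
    SCon2 Ag σ κ → Ty (SAtom2 Ag σ)
  | .base c => Ty.mapAtom SAtom2.base (conTy c)
  | .m α A =>
      Ty.arrows
        (Ty.atom (SAtom2.base A) ::
          List.map (fun q => Ty.atom (SAtom2.prf q.1 q.2)) (Cs α A))
        (Ty.atom (SAtom2.cert α A))
  | .pi α A => Ty.arrow (Ty.atom (SAtom2.cert α A)) (Ty.atom (SAtom2.base A))
  | .p α A => Ty.arrow (Ty.atom (SAtom2.base A)) (Ty.atom (SAtom2.prf α A))

/-- The second algorithm's `Safe(𝒜, C)`.  Its agents are those of `𝒜` (`Sum.inl α`)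
together with an input interface `I_α` (`Sum.inr (Sum.inl α)`) and an output interface
`O_α` (`Sum.inr (Sum.inr α)`) for each agent `α` of `𝒜`; its type system is `T_C`;
each agent of `𝒜` keeps its constructors; every output interface possesses all the
constructors `m_{αA}`, `I_α` possesses `π_{αA}`, and `O_α` possesses `p_{αA}`;
`I_α` may send any atomic type of `T` to `α`, and `α` may send any atomic type of `T`
to `O_α`; any two interfaces may send messages of type `C_α(A)` or `P_α(A)` to each
other. -/
def safeArch2 {Ag σ κ : Type} (𝒜 : Arch Ag σ κ) (Cs : Ag → σ → List (Ag × σ)) :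
    Arch (Ag ⊕ (Ag ⊕ Ag)) (SAtom2 Ag σ) (SCon2 Ag σ κ) where
  conTy := safeConTy2 𝒜.conTy Cs
  H := fun x =>
    match x with
    | .inl α => {c | ∃ c₀ ∈ 𝒜.H α, c = SCon2.base c₀}
    | .inr (.inl α) => {c | ∃ A, c = SCon2.pi α A}
    | .inr (.inr α) => {c | (∃ β A, c = SCon2.m β A) ∨ (∃ A, c = SCon2.p α A)}
  M := fun x y =>
    match x, y with
    | .inr (.inl γ), .inl α => {T | γ = α ∧ ∃ A, T = SAtom2.base A}
    | .inl α, .inr (.inr γ) => {T | γ = α ∧ ∃ A, T = SAtom2.base A}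
    | .inr _, .inr _ =>
        {T | (∃ α A, T = SAtom2.cert α A) ∨ (∃ α A, T = SAtom2.prf α A)}
    | _, _ => ∅

/-- Invariant on what an agent of the safe architecture may possess, relative to a
predicate `K β B` (agent `β` of `𝒜` possesses a term of type `B`). -/
inductive Inv {Ag σ κ : Type} (𝒜 : Arch Ag σ κ) (Cs : Ag → σ → List (Ag × σ))
    (K : Ag → σ → Prop) : Ag ⊕ (Ag ⊕ Ag) → Ty (SAtom2 Ag σ) → Prop where
  | own {α c Bs T₀ T} : c ∈ 𝒜.H α → 𝒜.conTy c = Ty.arrows Bs T₀ →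
      T = Ty.mapAtom SAtom2.base T₀ → Inv 𝒜 Cs K (.inl α) T
  | recv {α A T} : T = Ty.atom (SAtom2.base A) → (∀ q ∈ Cs α A, K q.1 q.2) →
      Inv 𝒜 Cs K (.inl α) T
  | pic {α A T} : T = Ty.arrow (Ty.atom (SAtom2.cert α A)) (Ty.atom (SAtom2.base A)) →
      Inv 𝒜 Cs K (.inr (.inl α)) T
  | piv {α A T} : T = Ty.atom (SAtom2.base A) → (∀ q ∈ Cs α A, K q.1 q.2) →
      Inv 𝒜 Cs K (.inr (.inl α)) T
  | pc {α A T} : T = Ty.arrow (Ty.atom (SAtom2.base A)) (Ty.atom (SAtom2.prf α A)) →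
      Inv 𝒜 Cs K (.inr (.inr α)) T
  | pv {α A T} : T = Ty.atom (SAtom2.base A) → K α A →
      Inv 𝒜 Cs K (.inr (.inr α)) T
  | m0 {α β A T} : T = Ty.arrow (Ty.atom (SAtom2.base A)) (Ty.arrows
        (List.map (fun q => Ty.atom (SAtom2.prf q.1 q.2)) (Cs β A))
        (Ty.atom (SAtom2.cert β A))) →
      Inv 𝒜 Cs K (.inr (.inr α)) T
  | m1 {α β A T ps qs} : Cs β A = ps ++ qs → (∀ q ∈ ps, K q.1 q.2) →
      T = Ty.arrows
        (List.map (fun q => Ty.atom (SAtom2.prf q.1 q.2)) qs)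
        (Ty.atom (SAtom2.cert β A)) →
      Inv 𝒜 Cs K (.inr (.inr α)) T
  | cert {i β A T} : T = Ty.atom (SAtom2.cert β A) → (∀ q ∈ Cs β A, K q.1 q.2) →
      Inv 𝒜 Cs K (.inr i) T
  | prf {i β A T} : T = Ty.atom (SAtom2.prf β A) → K β A →
      Inv 𝒜 Cs K (.inr i) T

theorem Inv.mono {Ag σ κ : Type} {𝒜 : Arch Ag σ κ} {Cs : Ag → σ → List (Ag × σ)}
    {K K' : Ag → σ → Prop} (hK : ∀ a A, K a A → K' a A) {x T}
    (h : Inv 𝒜 Cs K x T) : Inv 𝒜 Cs K' x T := by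
  cases h with
  | own h1 h2 h3 => exact .own h1 h2 h3
  | recv h1 h2 => exact .recv h1 fun q hq => hK _ _ (h2 q hq)
  | pic h1 => exact .pic h1
  | piv h1 h2 => exact .piv h1 fun q hq => hK _ _ (h2 q hq)
  | pc h1 => exact .pc h1
  | pv h1 h2 => exact .pv h1 (hK _ _ h2)
  | m0 h1 => exact .m0 h1
  | m1 h1 h2 h3 => exact .m1 h1 (fun q hq => hK _ _ (h2 q hq)) h3
  | cert h1 h2 => exact .cert h1 fun q hq => hK _ _ (h2 q hq)
  | prf h1 h2 => exact .prf h1 (hK _ _ h2)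

theorem arrows_snoc {σ : Type} (Bs : List (Ty σ)) (A B : Ty σ) :
    Ty.arrows Bs (Ty.arrow A B) = Ty.arrows (Bs ++ [A]) B := by
  induction Bs with
  | nil => rfl
  | cons C Cs ih => simp [Ty.arrows, ih]

theorem Inv.cert_inv {Ag σ κ : Type} {𝒜 : Arch Ag σ κ} {Cs : Ag → σ → List (Ag × σ)}
    {K : Ag → σ → Prop} {i β A}
    (h : Inv 𝒜 Cs K (.inr i) (Ty.atom (SAtom2.cert β A))) : ∀ q ∈ Cs β A, K q.1 q.2 := by
  cases h with
  | pic h1 => cases h1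
  | piv h1 h2 => cases h1
  | pc h1 => cases h1
  | pv h1 h2 => cases h1
  | m0 h1 => cases h1
  | @m1 _ _ _ _ ps qs h1 h2 h3 =>
    cases qs with
    | nil => cases h3; rw [h1]; simpa using h2
    | cons q qs => cases h3
  | cert h1 h2 => cases h1; exact h2
  | prf h1 h2 => cases h1

theorem Inv.prf_inv {Ag σ κ : Type} {𝒜 : Arch Ag σ κ} {Cs : Ag → σ → List (Ag × σ)}
    {K : Ag → σ → Prop} {i β A}
    (h : Inv 𝒜 Cs K (.inr i) (Ty.atom (SAtom2.prf β A))) : K β A := by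
  cases h with
  | pic h1 => cases h1
  | piv h1 h2 => cases h1
  | pc h1 => cases h1
  | pv h1 h2 => cases h1
  | m0 h1 => cases h1
  | @m1 _ _ _ _ ps qs h1 h2 h3 =>
    cases qs with
    | nil => cases h3
    | cons q qs => cases h3
  | cert h1 h2 => cases h1
  | prf h1 h2 => cases h1; exact h2

theorem Inv.base_inv_I {Ag σ κ : Type} {𝒜 : Arch Ag σ κ} {Cs : Ag → σ → List (Ag × σ)}
    {K : Ag → σ → Prop} {α A}
    (h : Inv 𝒜 Cs K (.inr (.inl α)) (Ty.atom (SAtom2.base A))) :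
    ∀ q ∈ Cs α A, K q.1 q.2 := by
  cases h with
  | pic h1 => cases h1
  | piv h1 h2 => cases h1; exact h2
  | cert h1 h2 => cases h1
  | prf h1 h2 => cases h1

theorem Inv.base_inv_O {Ag σ κ : Type} {𝒜 : Arch Ag σ κ} {Cs : Ag → σ → List (Ag × σ)}
    {K : Ag → σ → Prop} {α A}
    (h : Inv 𝒜 Cs K (.inr (.inr α)) (Ty.atom (SAtom2.base A))) : K α A := by
  cases h with
  | pc h1 => cases h1
  | pv h1 h2 => cases h1; exact h2
  | m0 h1 => cases h1
  | @m1 _ _ _ _ ps qs h1 h2 h3 =>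
    cases qs with
    | nil => cases h3
    | cons q qs => cases h3
  | cert h1 h2 => cases h1
  | prf h1 h2 => cases h1

theorem Inv.func {Ag σ κ : Type} {𝒜 : Arch Ag σ κ} {Cs : Ag → σ → List (Ag × σ)}
    {K : Ag → σ → Prop} {x A B} (hf : Inv 𝒜 Cs K x (Ty.arrow A B))
    (ht : Inv 𝒜 Cs K x A) : Inv 𝒜 Cs K x B := by
  cases hf with
  | @own _ _ _ T₀ _ h1 h2 h3 =>
    cases T₀ with
    | atom a => cases h3
    | arrow A₀ B₀ =>
      cases h3
      exact .own h1 (h2.trans (arrows_snoc _ _ _)) rfl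
  | recv h1 h2 => cases h1
  | pic h1 => cases h1; exact .piv rfl ht.cert_inv
  | piv h1 h2 => cases h1
  | pc h1 => cases h1; exact .prf rfl ht.base_inv_O
  | pv h1 h2 => cases h1
  | m0 h1 => cases h1; exact .m1 (ps := []) rfl (by simp) rfl
  | @m1 _ _ _ _ ps qs h1 h2 h3 =>
    cases qs with
    | nil => cases h3
    | cons q qs =>
      cases h3
      refine .m1 (ps := ps ++ [q]) (qs := qs) (by simpa using h1) ?_ rfl
      intro r hr
      rcases List.mem_append.1 hr with hr | hr
      · exact h2 r hr
      · rw [List.mem_singleton.1 hr]; exact ht.prf_inv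
  | cert h1 h2 => cases h1
  | prf h1 h2 => cases h1

theorem deriv_inv {Ag σ κ : Type} {𝒜 : Arch Ag σ κ} {Cs : Ag → σ → List (Ag × σ)}
    {τ x t T} (h : Deriv (safeArch2 𝒜 Cs) τ x t T) :
    Inv 𝒜 Cs (fun β B => ∃ s, Deriv (safeArch2 𝒜 Cs) τ (.inl β) s
      (Ty.atom (SAtom2.base B))) x T := by
  induction h with
  | @init x c hc =>
    rcases x with α | α | α
    · obtain ⟨c₀, h0, rfl⟩ := hc
      exact .own (Bs := []) h0 rfl rfl
    · obtain ⟨A, rfl⟩ := hc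
      exact .pic rfl
    · obtain ⟨β, A, rfl⟩ | ⟨A, rfl⟩ := hc
      · exact .m0 rfl
      · exact .pc rfl
  | @message₁ τ x y t A hM hd ih =>
    have ih' := ih.mono (K' := fun β B => ∃ s, Deriv (safeArch2 𝒜 Cs)
      (τ ++ [⟨x, t, Ty.atom A, y⟩]) (.inl β) s (Ty.atom (SAtom2.base B)))
      (fun a B ⟨s, hs⟩ => ⟨s, .message₂ hM hd hs⟩)
    have hd' := Deriv.message₂ hM hd hd
    rcases x with α | i
    · rcases y with β | β | β
      · exact hM.elim
      · exact hM.elim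
      · obtain ⟨rfl, A, rfl⟩ := hM
        exact .pv rfl ⟨_, hd'⟩
    · rcases y with β | j
      · rcases i with γ | γ
        · obtain ⟨rfl, A, rfl⟩ := hM
          exact .recv rfl ih'.base_inv_I
        · exact hM.elim
      · have hM' : (∃ α B, A = SAtom2.cert α B) ∨ (∃ α B, A = SAtom2.prf α B) := by
          rcases i with i | i <;> exact hM
        obtain ⟨α, B, rfl⟩ | ⟨α, B, rfl⟩ := hM'
        · exact .cert rfl ih'.cert_inv
        · exact .prf rfl ih'.prf_inv
  | message₂ hM hd hs ih1 ih2 =>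
    exact ih2.mono (fun a B ⟨s, hs⟩ => ⟨s, .message₂ hM hd hs⟩)
  | func _ _ ih1 ih2 => exact ih1.func ih2

/-- let `C` consist of negative constraints `α ∋ A ⇒ β ∋ B` (given by
`Cs`) and positive constraints (given by `Pos`), both finite, such that for every
negative constraint `α ∋ A ⇒ β ∋ B` in `C` the agent `α` cannot compute terms of
type `A`.  Then every valid trace through the second algorithm's `Safe(𝒜, C)`
satisfies every negative constraint in `C`. -/
theorem safeArch2_neg_constraints {Ag σ κ : Type}
    (𝒜 : Arch Ag σ κ) (Cs : Ag → σ → List (Ag × σ)) (Pos : Set (Ag × σ))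
    (hfin : {p : Ag × σ | Cs p.1 p.2 ≠ []}.Finite) (hfinPos : Pos.Finite)
    (hcc : ∀ (α : Ag) (A : σ) (β : Ag) (B : σ), (β, B) ∈ Cs α A →
      ¬ CanCompute 𝒜 α A) :
    ∀ τ : Trace (Ag ⊕ (Ag ⊕ Ag)) (SAtom2 Ag σ) (SCon2 Ag σ κ),
      ValidTrace (safeArch2 𝒜 Cs) τ →
      ∀ (α : Ag) (A : σ) (β : Ag) (B : σ), (β, B) ∈ Cs α A →
        ∀ τ', τ' <+: τ →
          (∃ t, Deriv (safeArch2 𝒜 Cs) τ' (Sum.inl α) t (Ty.atom (SAtom2.base A))) →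
          ∃ s, Deriv (safeArch2 𝒜 Cs) τ' (Sum.inl β) s (Ty.atom (SAtom2.base B)) := by
  intro τ _ α A β B hmem τ' _ ⟨t, ht⟩
  cases deriv_inv ht with
  | @own _ _ _ T₀ _ h1 h2 h3 =>
    cases T₀ with
    | atom a => cases h3; exact (hcc α A β B hmem ⟨_, h1, _, h2⟩).elim
    | arrow A₀ B₀ => cases h3
  | recv h1 h2 => cases h1; exact h2 _ hmem

end PrivacyByDesign
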